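/- arXiv:0904.0535 — 3 statements merged into one kernel-verified Lean document; each statement's English description precedes it below -/
import Mathlib

section
/- Let L be a (1,1)-tensor field with N_L = 0, let χ = χ1·χ2 be an admissible factorisation of its characteristic polynomial, and let (x¹,…,x^r, y^{r+1},…,y^n) be adapted coordinates in which L = diag(L1(x), L2(y)), so that χ2 is the characteristic polynomial of L2 and its coefficients depend only on y. Then the expression χ2(L1)^{-1}·(d_y χ2(L1)) (where d_y differentiates the y-dependent coefficients of χ2, L1 being kept fixed) satisfies (χ2(L1)^{-1} d_y χ2(L1))·L2 − L1·(χ2(L1)^{-1} d_y χ2(L1)) = Id_{D1} ⊗ l2, i.e., in coordinates, (χ2(L1)^{-1})^j_m (∂_{y^β} χ2(L1))^m_k (L2)^β_α − (L1)^j_m (χ2(L1)^{-1})^m_l (∂_{y^α} χ2(L1))^l_k = δ^j_k · ∂_{y^α}(tr L2), where l2 = d(tr L2). -/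
open Matrix Polynomial Filter

noncomputable section

variable {ι : Type} [Fintype ι] [DecidableEq ι]

/-- Partial derivative of a real-valued function on `ι → ℝ` in the direction of the
`j`-th coordinate vector. -/
def pd (j : ι) (F : (ι → ℝ) → ℝ) (x : ι → ℝ) : ℝ :=
  fderiv ℝ F x (Pi.single j 1)

/-- Christoffel symbols `Γ^i_{jk}` of a metric given in local coordinates as a
matrix-valued function. -/
def christoffel (g : (ι → ℝ) → Matrix ι ι ℝ) (x : ι → ℝ) (i j k : ι) : ℝ :=
  (1 / 2) * ∑ m, (g x)⁻¹ i m *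
    (pd j (fun y => g y m k) x + pd k (fun y => g y m j) x - pd m (fun y => g y j k) x)

/-- A curve is a geodesic of `g` up to reparametrisation (an unparametrized geodesic):
`γ̈ + Γ(γ̇,γ̇) = α(t)·γ̇` for some function `α`. -/
def IsPregeodesic (g : (ι → ℝ) → Matrix ι ι ℝ) (γ : ℝ → ι → ℝ) : Prop :=
  ∃ α : ℝ → ℝ, ∀ t : ℝ, ∀ i : ι,
    deriv (fun s => deriv (fun τ => γ τ i) s) t
      + ∑ j, ∑ k, christoffel g (γ t) i j k *
          deriv (fun τ => γ τ j) t * deriv (fun τ => γ τ k) t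
      = α t * deriv (fun τ => γ τ i) t

/-- `g` is a pseudo-Riemannian metric (in local coordinates) on the set `U`. -/
structure IsMetricOn (g : (ι → ℝ) → Matrix ι ι ℝ) (U : Set (ι → ℝ)) : Prop where
  smooth : ∀ i j, ContDiffOn ℝ (⊤ : ℕ∞) (fun x => g x i j) U
  symm : ∀ x ∈ U, (g x)ᵀ = g x
  nondeg : ∀ x ∈ U, IsUnit (g x).det

/-- Two metrics are geodesically equivalent on `U`: they have the same geodesics
considered as unparametrized curves. -/
def GeodEquiv (g gb : (ι → ℝ) → Matrix ι ι ℝ) (U : Set (ι → ℝ)) : Prop :=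
  ∀ γ : ℝ → ι → ℝ, ContDiff ℝ (⊤ : ℕ∞) γ → (∀ t, γ t ∈ U) →
    (IsPregeodesic g γ ↔ IsPregeodesic gb γ)

/-- The (1,1)-tensor `L(g,ḡ)^i_j = (det ḡ / det g)^{1/(n+1)} ḡ^{ik} g_{kj}`. -/
def Lten (g gb : (ι → ℝ) → Matrix ι ι ℝ) (x : ι → ℝ) : Matrix ι ι ℝ :=
  (((gb x).det / (g x).det) ^ ((1 : ℝ) / (Fintype.card ι + 1))) • ((gb x)⁻¹ * g x)

/-- An admissible factorisation `χ = χ₁·χ₂` of the characteristic polynomial of `L`: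
both factors are monic of degree ≥ 1, have smooth coefficients, and have no common
complex root at any point of `U`. -/
structure AdmissibleFact (L : (ι → ℝ) → Matrix ι ι ℝ) (U : Set (ι → ℝ))
    (chi1 chi2 : (ι → ℝ) → Polynomial ℝ) : Prop where
  factor : ∀ x ∈ U, (L x).charpoly = chi1 x * chi2 x
  monic1 : ∀ x ∈ U, (chi1 x).Monic
  monic2 : ∀ x ∈ U, (chi2 x).Monic
  deg1 : ∀ x ∈ U, 1 ≤ (chi1 x).natDegree
  deg2 : ∀ x ∈ U, 1 ≤ (chi2 x).natDegree
  smooth1 : ∀ k, ContDiffOn ℝ (⊤ : ℕ∞) (fun x => (chi1 x).coeff k) U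
  smooth2 : ∀ k, ContDiffOn ℝ (⊤ : ℕ∞) (fun x => (chi2 x).coeff k) U
  coprime : ∀ x ∈ U, ¬ ∃ z : ℂ, aeval z (chi1 x) = 0 ∧ aeval z (chi2 x) = 0

/-- The distribution `D = ker χ(L)`. -/
def Dker (L : (ι → ℝ) → Matrix ι ι ℝ) (chi : (ι → ℝ) → Polynomial ℝ) (x : ι → ℝ) :
    Submodule ℝ (ι → ℝ) :=
  LinearMap.ker (Matrix.mulVecLin (aeval (L x) (chi x)))

/-- A distribution on `U` is integrable (involutive, which is equivalent by the
Frobenius theorem): the Lie bracket of any two smooth vector fields tangent to the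
distribution is again tangent to it. -/
def IsIntegrableDist (U : Set (ι → ℝ)) (D : (ι → ℝ) → Submodule ℝ (ι → ℝ)) : Prop :=
  ∀ u v : (ι → ℝ) → ι → ℝ, ContDiffOn ℝ (⊤ : ℕ∞) u U → ContDiffOn ℝ (⊤ : ℕ∞) v U →
    (∀ x ∈ U, u x ∈ D x) → (∀ x ∈ U, v x ∈ D x) →
    ∀ x ∈ U, (fderiv ℝ v x (u x) - fderiv ℝ u x (v x)) ∈ D x

/-- The Lie bracket of two vector fields on `ι → ℝ`. -/
def vbracket (u v : (ι → ℝ) → ι → ℝ) (x : ι → ℝ) : ι → ℝ :=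
  fderiv ℝ v x (u x) - fderiv ℝ u x (v x)

/-- The vector field `Lu : x ↦ L(x)(u(x))`. -/
def appT (L : (ι → ℝ) → Matrix ι ι ℝ) (u : (ι → ℝ) → ι → ℝ) : (ι → ℝ) → ι → ℝ :=
  fun x => (L x).mulVec (u x)

/-- The Nijenhuis torsion `N_L(u,v) = L²[u,v] − L[Lu,v] − L[u,Lv] + [Lu,Lv]`. -/
def nijenhuis (L : (ι → ℝ) → Matrix ι ι ℝ) (u v : (ι → ℝ) → ι → ℝ)
    (x : ι → ℝ) : ι → ℝ :=
  (L x).mulVec ((L x).mulVec (vbracket u v x))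
  - (L x).mulVec (vbracket (appT L u) v x)
  - (L x).mulVec (vbracket u (appT L v) x)
  + vbracket (appT L u) (appT L v) x

/-- `N_L = 0` on `U`, tested against all smooth vector fields. -/
def NijenhuisZero (L : (ι → ℝ) → Matrix ι ι ℝ) (U : Set (ι → ℝ)) : Prop :=
  ∀ u v : (ι → ℝ) → ι → ℝ, ContDiff ℝ (⊤ : ℕ∞) u → ContDiff ℝ (⊤ : ℕ∞) v →
    ∀ x ∈ U, nijenhuis L u v x = 0

/-- Inclusion of the first `r` indices. -/
def inj1 {n r : ℕ} (hr : r ≤ n) (i : Fin r) : Fin n := Fin.castLE hr i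

/-- Inclusion of the last `n - r` indices. -/
def inj2 {n r : ℕ} (i : Fin (n - r)) : Fin n :=
  ⟨r + (i : ℕ), by have := i.isLt; omega⟩

/-!
Let `M` be a block of `L` and `χ` its characteristic polynomial. By Jacobi's formula
`dχ(t) = -tr (adj (t - M) dM)`. Vanishing torsion says that `∑ b, M b a • ∂_b M` equals `M * ∂_a M`
up to a commutator with `M`, and the trace against `adj (t - M)`, which commutes with `M`, kills
that commutator. What remains is the polynomial identity
`∑ b, M b a • ∂_b χ - t • ∂_a χ = ∂_a (tr M) • χ`. Any matrix `A` whose characteristic polynomial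
is coprime to `χ` may be substituted for `t`; then `χ(A)` is invertible by Cayley–Hamilton, and
multiplying by `χ(A)⁻¹` gives the claim.
-/

section MatrixDerivative

variable {𝕜 E κ : Type*} [NontriviallyNormedField 𝕜] [NormedAddCommGroup E] [NormedSpace 𝕜 E]

/-- The derivative of a matrix field `M` at `x` in the direction `v`, taken entrywise because
`Matrix` carries no canonical norm. -/
def matrixFDeriv (M : E → Matrix κ κ 𝕜) (x v : E) : Matrix κ κ 𝕜 :=
  of fun i j => fderiv 𝕜 (fun y => M y i j) x v

@[simp]
theorem matrixFDeriv_apply (M : E → Matrix κ κ 𝕜) (x v : E) (i j : κ) :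
    matrixFDeriv M x v i j = fderiv 𝕜 (fun y => M y i j) x v :=
  rfl

theorem matrixFDeriv_const_sub (A : Matrix κ κ 𝕜) (M : E → Matrix κ κ 𝕜) (x v : E) :
    matrixFDeriv (fun y => A - M y) x v = -matrixFDeriv M x v := by
  ext i j
  simp [fderiv_const_sub]

variable [Fintype κ]

theorem fderiv_matrix_trace {M : E → Matrix κ κ 𝕜} {x : E}
    (hM : ∀ i j, DifferentiableAt 𝕜 (fun y => M y i j) x) (v : E) :
    fderiv 𝕜 (fun y => (M y).trace) x v = (matrixFDeriv M x v).trace := by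
  simp only [trace, diag_apply, matrixFDeriv_apply, fderiv_fun_sum fun i _ => hM i i,
    _root_.sum_apply]

variable [DecidableEq κ]

variable (𝕜 κ) in
/-- The determinant as a continuous multilinear function of the rows. -/
def detContinuousMultilinear : ContinuousMultilinearMap 𝕜 (fun _ : κ => κ → 𝕜) 𝕜 where
  toMultilinearMap := (detRowAlternating (n := κ) (R := 𝕜)).toMultilinearMap
  cont := Continuous.matrix_det (A := fun A : Matrix κ κ 𝕜 => A) continuous_id

theorem linearDeriv_detContinuousMultilinear (A H : κ → κ → 𝕜) :
    (detContinuousMultilinear 𝕜 κ).linearDeriv A H = ((of A).adjugate * of H).trace := by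
  have hrow (i : κ) : ((of A).updateRow i (H i)).det = (of H * (of A).adjugate) i i := by
    rw [← det_transpose, ← updateCol_transpose, ← cramer_apply, cramer_eq_adjugate_mulVec,
      ← adjugate_transpose, mulVec_transpose]
    rfl
  rw [ContinuousMultilinearMap.linearDeriv_apply, trace_mul_comm]
  exact Finset.sum_congr rfl fun i _ => hrow i

theorem fderiv_matrix_det {M : E → Matrix κ κ 𝕜} {x : E}
    (hM : ∀ i j, DifferentiableAt 𝕜 (fun y => M y i j) x) (v : E) :
    fderiv 𝕜 (fun y => (M y).det) x v = ((M x).adjugate * matrixFDeriv M x v).trace := by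
  have hrows : HasFDerivAt (fun y i j => M y i j)
      (.pi fun i => .pi fun j => fderiv 𝕜 (fun y => M y i j) x) x :=
    hasFDerivAt_pi.2 fun i => hasFDerivAt_pi.2 fun j => (hM i j).hasFDerivAt
  have hdet := ((detContinuousMultilinear 𝕜 κ).hasFDerivAt (M x)).comp x hrows
  exact (DFunLike.congr_fun hdet.fderiv v).trans (linearDeriv_detContinuousMultilinear _ _)

theorem differentiableAt_charpoly_coeff {M : E → Matrix κ κ 𝕜} {x : E}
    (hM : ∀ i j, DifferentiableAt 𝕜 (fun y => M y i j) x) (d : ℕ) :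
    DifferentiableAt 𝕜 (fun y => (M y).charpoly.coeff d) x := by
  have hP (A : Matrix κ κ 𝕜) : A.charpoly.coeff d =
      MvPolynomial.eval (fun p : κ × κ => A p.1 p.2) ((charpoly.univ 𝕜 κ).coeff d) := by
    rw [MvPolynomial.eval, charpoly.univ_coeff_eval₂Hom]
    rfl
  have hentries : DifferentiableAt 𝕜 (fun y (p : κ × κ) => M y p.1 p.2) x :=
    differentiableAt_pi.2 fun p => hM p.1 p.2
  have heval := AnalyticOnNhd.eval_continuousLinearMap (.id 𝕜 (κ × κ → 𝕜))
    ((charpoly.univ 𝕜 κ).coeff d)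
  simp_rw [hP]
  exact (heval _ trivial).differentiableAt.comp x hentries

/-- The differential of the characteristic polynomial of a matrix field `M` at `x` in the
direction `v`: only the coefficients are differentiated, the indeterminate is kept fixed. -/
def charpolyFDeriv (M : E → Matrix κ κ 𝕜) (x v : E) : 𝕜[X] :=
  ∑ d ∈ Finset.range (Fintype.card κ + 1),
    C (fderiv 𝕜 (fun y => (M y).charpoly.coeff d) x v) * X ^ d

theorem eval_charpolyFDeriv {M : E → Matrix κ κ 𝕜} {x : E}
    (hM : ∀ i j, DifferentiableAt 𝕜 (fun y => M y i j) x) (v : E) (t : 𝕜) :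
    (charpolyFDeriv M x v).eval t =
      -((scalar κ t - M x).adjugate * matrixFDeriv M x v).trace := by
  have hdet (y : E) : (scalar κ t - M y).det =
      ∑ d ∈ Finset.range (Fintype.card κ + 1), (M y).charpoly.coeff d * t ^ d := by
    rw [← eval_charpoly, eval_eq_sum_range, charpoly_natDegree_eq_dim]
  have hcoeff := differentiableAt_charpoly_coeff hM
  calc (charpolyFDeriv M x v).eval t
      = ∑ d ∈ Finset.range (Fintype.card κ + 1),
          fderiv 𝕜 (fun y => (M y).charpoly.coeff d * t ^ d) x v := by
        simp [charpolyFDeriv, eval_finsetSum, fderiv_mul_const (hcoeff _), mul_comm (t ^ _)]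
    _ = fderiv 𝕜 (fun y => (scalar κ t - M y).det) x v := by
        simp_rw [hdet]
        rw [fderiv_fun_sum fun d _ => (hcoeff d).mul_const _, _root_.sum_apply]
    _ = -((scalar κ t - M x).adjugate * matrixFDeriv M x v).trace := by
        have hsub : ∀ i j, DifferentiableAt 𝕜 (fun y => (scalar κ t - M y) i j) x :=
          fun i j => (hM i j).const_sub _
        rw [fderiv_matrix_det hsub, matrixFDeriv_const_sub, Matrix.mul_neg, trace_neg]

end MatrixDerivative

section Torsion

variable {𝕜 E n κ : Type*} [NontriviallyNormedField 𝕜] [NormedAddCommGroup E] [NormedSpace 𝕜 E]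
  [Fintype n] [Fintype κ]

/-- The components `Nⁱ_{aj}` of the Nijenhuis torsion of a matrix field `M` at `x`, where the
partial derivatives are taken along constant vectors `e b` that need not span `E`. This allows `M`
to be a diagonal block of a larger operator. -/
def torsionCoeff (M : E → Matrix κ κ 𝕜) (e : κ → E) (x : E) (i a j : κ) : 𝕜 :=
  ∑ b, (M x b a * matrixFDeriv M x (e b) i j - M x b j * matrixFDeriv M x (e b) i a
    - M x i b * matrixFDeriv M x (e a) b j + M x i b * matrixFDeriv M x (e j) b a)

theorem torsionCoeff_submatrix {M : E → Matrix n n 𝕜} {x : E} {f : κ → n}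
    (hf : Function.Injective f)
    (hblock : ∀ b ∉ Set.range f, ∀ i, M x b (f i) = 0 ∧ M x (f i) b = 0)
    (e : n → E) (i a j : κ) :
    torsionCoeff (fun y => (M y).submatrix f f) (fun b => e (f b)) x i a j =
      torsionCoeff M e x (f i) (f a) (f j) :=
  Fintype.sum_of_injective f hf _ _ (fun b hb => by simp [hblock b hb]) fun _ => rfl

theorem sum_smul_matrixFDeriv_of_torsionCoeff_eq_zero {M : E → Matrix κ κ 𝕜} {e : κ → E} {x : E}
    {a : κ} (hN : ∀ i j, torsionCoeff M e x i a j = 0) :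
    ∃ J : Matrix κ κ 𝕜, ∑ b, M x b a • matrixFDeriv M x (e b) =
      M x * matrixFDeriv M x (e a) + (J * M x - M x * J) := by
  refine ⟨of fun i j => matrixFDeriv M x (e j) i a, ?_⟩
  ext i j
  have hij := hN i j
  simp only [torsionCoeff, Finset.sum_add_distrib, Finset.sum_sub_distrib] at hij
  simp only [Matrix.sum_apply, Matrix.smul_apply, Matrix.add_apply, Matrix.sub_apply, mul_apply,
    smul_eq_mul, of_apply, mul_comm (matrixFDeriv M x _ i a)]
  linear_combination hij

theorem trace_mul_commutator_eq_zero {R : Type*} [CommRing R] {A B : Matrix κ κ R}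
    (h : Commute B A) (J : Matrix κ κ R) : (B * (J * A - A * J)).trace = 0 := by
  rw [Matrix.mul_sub, trace_sub, ← Matrix.mul_assoc, trace_mul_comm, ← Matrix.mul_assoc,
    ← Matrix.mul_assoc, h.eq, sub_self]

variable [DecidableEq κ]

theorem commute_adjugate_scalar_sub {R : Type*} [CommRing R] (A : Matrix κ κ R) (t : R) :
    Commute (scalar κ t - A).adjugate A := by
  have hself : Commute (scalar κ t - A).adjugate (scalar κ t - A) :=
    (adjugate_mul _).trans (mul_adjugate _).symm
  simpa using (scalar_commute t (Commute.all t) _).symm.sub_right hself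

theorem sum_C_mul_charpolyFDeriv_sub {M : E → Matrix κ κ 𝕜} {e : κ → E} {x : E} {a : κ}
    (hM : ∀ i j, DifferentiableAt 𝕜 (fun y => M y i j) x)
    (hN : ∀ i j, torsionCoeff M e x i a j = 0) :
    ∑ b, C (M x b a) * charpolyFDeriv M x (e b) - X * charpolyFDeriv M x (e a) =
      C (fderiv 𝕜 (fun y => (M y).trace) x (e a)) * (M x).charpoly := by
  obtain ⟨J, hJ⟩ := sum_smul_matrixFDeriv_of_torsionCoeff_eq_zero hN
  refine Polynomial.funext fun t => ?_
  let B := (scalar κ t - M x).adjugate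
  let D := fun b => matrixFDeriv M x (e b)
  have hsum : ∑ b, M x b a * (B * D b).trace = (B * (M x * D a)).trace := calc
    _ = (B * ∑ b, M x b a • D b).trace := by simp [Matrix.mul_sum, trace_sum]
    _ = (B * (M x * D a)).trace := by
      rw [hJ, Matrix.mul_add, trace_add,
        trace_mul_commutator_eq_zero (commute_adjugate_scalar_sub _ _), add_zero]
  have hadj : t * (B * D a).trace - (B * (M x * D a)).trace =
      (D a).trace * (scalar κ t - M x).det := calc
    _ = (B * (scalar κ t - M x) * D a).trace := by
      rw [Matrix.mul_assoc, Matrix.sub_mul, Matrix.mul_sub, trace_sub]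
      simp [← smul_eq_diagonal_mul]
    _ = _ := by simp [B, adjugate_mul, mul_comm]
  calc eval t (∑ b, C (M x b a) * charpolyFDeriv M x (e b) - X * charpolyFDeriv M x (e a))
      = t * (B * D a).trace - ∑ b, M x b a * (B * D b).trace := by
        simp [eval_finsetSum, eval_charpolyFDeriv hM, B, D, neg_add_eq_sub]
    _ = eval t (C (fderiv 𝕜 (fun y => (M y).trace) x (e a)) * (M x).charpoly) := by
        rw [hsum, hadj, eval_mul, eval_C, eval_charpoly, fderiv_matrix_trace hM]

theorem sum_smul_inv_mul_aeval_charpolyFDeriv_sub {S : Type*} [Ring S] [Algebra 𝕜 S]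
    {M : E → Matrix κ κ 𝕜} {e : κ → E} {x : E} {a : κ}
    (hM : ∀ i j, DifferentiableAt 𝕜 (fun y => M y i j) x)
    (hN : ∀ i j, torsionCoeff M e x i a j = 0) {s : S} {u : Sˣ}
    (hu : u = aeval s (M x).charpoly) :
    ∑ b, M x b a • (↑u⁻¹ * aeval s (charpolyFDeriv M x (e b)))
        - s * (↑u⁻¹ * aeval s (charpolyFDeriv M x (e a))) =
      algebraMap 𝕜 S (fderiv 𝕜 (fun y => (M y).trace) x (e a)) := by
  have haeval := congrArg (aeval s) (sum_C_mul_charpolyFDeriv_sub hM hN)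
  simp only [map_sub, map_sum, map_mul, aeval_C, aeval_X, ← Algebra.smul_def, ← hu] at haeval
  have hcomm : Commute s ↑u⁻¹ := by
    have : Commute s u := by simpa [hu] using (commute_X (M x).charpoly).map (aeval s)
    exact this.units_inv_right
  calc _ = ↑u⁻¹ * (∑ b, M x b a • aeval s (charpolyFDeriv M x (e b))
          - s * aeval s (charpolyFDeriv M x (e a))) := by
        simp only [mul_sub, Finset.mul_sum, mul_smul_comm, ← mul_assoc, hcomm.eq]
    _ = _ := by rw [haeval, mul_smul_comm, Units.inv_mul, Algebra.algebraMap_eq_smul_one]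

end Torsion

theorem isUnit_aeval_of_isCoprime {R S : Type*} [CommRing R] [Ring S] [Algebra R S] {s : S}
    {p q : R[X]} (hp : aeval s p = 0) (hpq : IsCoprime p q) : IsUnit (aeval s q) := by
  obtain ⟨u, v, huv⟩ := hpq
  have hinv : aeval s v * aeval s q = 1 := by simpa [hp] using congrArg (aeval s) huv
  have hcomm : Commute (aeval s v) (aeval s q) := (Commute.all v q).map (aeval s)
  exact ⟨⟨_, _, hcomm.eq ▸ hinv, hinv⟩, rfl⟩

theorem isCoprime_iff_no_common_complex_root {p q : ℝ[X]} :
    IsCoprime p q ↔ ¬ ∃ z : ℂ, aeval z p = 0 ∧ aeval z q = 0 := by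
  rw [Polynomial.isCoprime_iff_aeval_ne_zero_of_isAlgClosed ℝ ℂ]
  simp only [not_exists, not_and_or]

theorem fderiv_apply_eq_sum_pd (F : (ι → ℝ) → ℝ) (x v : ι → ℝ) :
    fderiv ℝ F x v = ∑ b, v b * pd b F x := by
  conv_lhs => rw [pi_eq_sum_univ' v]
  simp [pd]

theorem nijenhuis_single_apply {L : (ι → ℝ) → Matrix ι ι ℝ} {x : ι → ℝ}
    (hL : ∀ i j, DifferentiableAt ℝ (fun y => L y i j) x) (a j i : ι) :
    nijenhuis L (fun _ => Pi.single a 1) (fun _ => Pi.single j 1) x i =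
      torsionCoeff L (fun b => Pi.single b 1) x i a j := by
  have hcol (k : ι) : appT L (fun _ => Pi.single k 1) = fun y i => L y i k := by
    ext y i
    simp [appT]
  have hcol_fderiv (k l : ι) (v : ι → ℝ) :
      fderiv ℝ (fun y i => L y i k) x v l = fderiv ℝ (fun y => L y l k) x v := by
    rw [fderiv_pi fun i => hL i k]
    rfl
  simp only [nijenhuis, vbracket, hcol, Pi.add_apply, Pi.sub_apply, Pi.neg_apply, mulVec,
    dotProduct, hcol_fderiv, fderiv_fun_const, Pi.zero_apply, _root_.zero_apply, sub_zero, zero_sub,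
    mul_zero, mul_neg, Finset.sum_const_zero, Finset.sum_neg_distrib]
  simp only [fderiv_apply_eq_sum_pd _ x (fun i => L x i _), pd, torsionCoeff, matrixFDeriv_apply,
    Finset.sum_add_distrib, Finset.sum_sub_distrib]
  ring

theorem torsionCoeff_eq_zero_of_nijenhuisZero {L : (ι → ℝ) → Matrix ι ι ℝ} {x : ι → ℝ}
    (hL : ∀ i j, DifferentiableAt ℝ (fun y => L y i j) x) (hN : NijenhuisZero L {x})
    (i a j : ι) : torsionCoeff L (fun b => Pi.single b 1) x i a j = 0 := by
  rw [← nijenhuis_single_apply hL, hN _ _ contDiff_const contDiff_const x rfl, Pi.zero_apply]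

theorem stmt17_general {κ m : Type*} [Fintype κ] [DecidableEq κ] [Fintype m] [DecidableEq m]
    {L : (ι → ℝ) → Matrix ι ι ℝ} {x : ι → ℝ}
    (hL : ∀ i j, DifferentiableAt ℝ (fun y => L y i j) x) (hN : NijenhuisZero L {x})
    {f : κ → ι} (hf : Function.Injective f)
    {L2 : (ι → ℝ) → Matrix κ κ ℝ} (hL2 : ∀ y, L2 y = (L y).submatrix f f)
    (hblock : ∀ b ∉ Set.range f, ∀ i, L x b (f i) = 0 ∧ L x (f i) b = 0)
    {A : Matrix m m ℝ} (hA : IsCoprime A.charpoly (L2 x).charpoly) {dyC : κ → Matrix m m ℝ}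
    (hdyC : ∀ β i l, dyC β i l = ∑ d ∈ Finset.range (Fintype.card κ + 1),
      pd (f β) (fun y => (L2 y).charpoly.coeff d) x * (A ^ d) i l) (j k : m) (α : κ) :
    (∑ β, (∑ i, (aeval A (L2 x).charpoly)⁻¹ j i * dyC β i k) * L2 x β α)
        - ∑ i, A j i * ∑ l, (aeval A (L2 x).charpoly)⁻¹ i l * dyC α l k =
      (if j = k then 1 else 0) * pd (f α) (fun y => (L2 y).trace) x := by
  obtain rfl : L2 = fun y => (L y).submatrix f f := funext hL2
  have htorsion (i l : κ) :=
    (torsionCoeff_submatrix hf hblock (fun b => Pi.single b 1) i α l).trans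
      (torsionCoeff_eq_zero_of_nijenhuisZero hL hN _ _ _)
  obtain ⟨u, hu⟩ := isUnit_aeval_of_isCoprime (aeval_self_charpoly A) hA
  obtain rfl : dyC = fun β => aeval A (charpolyFDeriv (fun y => (L y).submatrix f f) x
      (Pi.single (f β) 1)) := by
    ext β i l
    simp [hdyC, charpolyFDeriv, pd, Matrix.sum_apply, ← Algebra.smul_def]
  have hmat := sum_smul_inv_mul_aeval_charpolyFDeriv_sub (M := fun y => (L y).submatrix f f)
    (fun i l => hL (f i) (f l)) htorsion hu
  have hjk := congrFun₂ hmat j k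
  rw [coe_units_inv, hu] at hjk
  simpa [Matrix.sum_apply, mul_apply, algebraMap_matrix_apply, pd, mul_comm] using hjk

theorem inj2_injective {n r : ℕ} : Function.Injective (inj2 : Fin (n - r) → Fin n) := by
  intro a b h
  simpa [inj2, Fin.ext_iff] using h

theorem lt_of_notMem_range_inj2 {n r : ℕ} {b : Fin n}
    (hb : b ∉ Set.range (inj2 : Fin (n - r) → Fin n)) : (b : ℕ) < r := by
  by_contra! hrb
  exact hb ⟨⟨b - r, by omega⟩, by ext; simp [inj2, hrb]⟩

theorem eq_zero_of_notMem_range_inj2 {R : Type*} [Zero R] {n r : ℕ} {A : Matrix (Fin n) (Fin n) R}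
    (hA : ∀ i j : Fin n, ((i : ℕ) < r ∧ r ≤ (j : ℕ)) ∨ (r ≤ (i : ℕ) ∧ (j : ℕ) < r) → A i j = 0)
    {b : Fin n} (hb : b ∉ Set.range (inj2 : Fin (n - r) → Fin n)) (i : Fin (n - r)) :
    A b (inj2 i) = 0 ∧ A (inj2 i) b = 0 :=
  have hbr := lt_of_notMem_range_inj2 hb
  have hri : r ≤ (inj2 i : Fin n) := Nat.le_add_right _ _
  ⟨hA _ _ (.inl ⟨hbr, hri⟩), hA _ _ (.inr ⟨hri, hbr⟩)⟩

theorem stmt17 {n r : ℕ} (hr : r ≤ n) (U : Set (Fin n → ℝ)) (hU : IsOpen U)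
    (L : (Fin n → ℝ) → Matrix (Fin n) (Fin n) ℝ)
    (hLsmooth : ∀ i j, ContDiffOn ℝ (⊤ : ℕ∞) (fun x => L x i j) U)
    (hNL : NijenhuisZero L U)
    -- `L1`, `L2` are the two diagonal blocks of `L`
    (L1 : (Fin n → ℝ) → Matrix (Fin r) (Fin r) ℝ)
    (hL1 : ∀ x, L1 x = Matrix.of fun i j => L x (inj1 hr i) (inj1 hr j))
    (L2 : (Fin n → ℝ) → Matrix (Fin (n - r)) (Fin (n - r)) ℝ)
    (hL2 : ∀ x, L2 x = Matrix.of fun i j => L x (inj2 i) (inj2 j))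
    -- `L` is block-diagonal in the adapted coordinates, `L1` depends only on the
    -- `x`-variables and `L2` only on the `y`-variables
    (hblock : ∀ x ∈ U, ∀ i j : Fin n,
      (((i : ℕ) < r ∧ r ≤ (j : ℕ)) ∨ (r ≤ (i : ℕ) ∧ (j : ℕ) < r)) → L x i j = 0)
    (hL1x : ∀ x ∈ U, ∀ i j : Fin r, ∀ β : Fin (n - r),
      pd (inj2 β) (fun y => L1 y i j) x = 0)
    (hL2y : ∀ x ∈ U, ∀ i j : Fin (n - r), ∀ k : Fin r,
      pd (inj1 hr k) (fun y => L2 y i j) x = 0)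
    -- the factorisation `χ = χ₁·χ₂` into the characteristic polynomials of the
    -- blocks is admissible: no common complex roots
    (hcop : ∀ x ∈ U, ¬ ∃ z : ℂ,
      aeval z ((L1 x).charpoly) = 0 ∧ aeval z ((L2 x).charpoly) = 0) :
    -- then `(χ₂(L1)⁻¹ d_y χ₂(L1))·L2 − L1·(χ₂(L1)⁻¹ d_y χ₂(L1)) = Id ⊗ l₂`
    ∀ x ∈ U, ∀ j k : Fin r, ∀ α : Fin (n - r),
      -- `d_y χ₂(L1)` in the direction `y^β`, where only the (`y`-dependent)
      -- coefficients of `χ₂` are differentiated: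
      (∀ dyC : Fin (n - r) → Matrix (Fin r) (Fin r) ℝ,
        (∀ β m l, dyC β m l = ∑ d ∈ Finset.range (n - r + 1),
          pd (inj2 β) (fun y => ((L2 y).charpoly).coeff d) x * ((L1 x ^ d) m l)) →
        (∑ β, (∑ m, ((aeval (L1 x) ((L2 x).charpoly))⁻¹ j m) * dyC β m k) * L2 x β α)
          - (∑ m, L1 x j m *
              (∑ l, ((aeval (L1 x) ((L2 x).charpoly))⁻¹ m l) * dyC α l k))
          = (if j = k then 1 else 0) * pd (inj2 α) (fun y => (L2 y).trace) x) := by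
  intro x hx j k α dyC hdyC
  exact stmt17_general
    (fun i j => ((hLsmooth i j).contDiffAt (hU.mem_nhds hx)).differentiableAt (by simp))
    (fun u v hu hv _ hy => hNL u v hu hv _ (hy ▸ hx)) inj2_injective hL2
    (fun _ => eq_zero_of_notMem_range_inj2 (hblock x hx))
    (isCoprime_iff_no_common_complex_root.2 (hcop x hx)) (by simpa using hdyC) j k α
end
end

section
/- Let g be a pseudo-Riemannian metric and L a nondegenerate g-self-adjoint (1,1)-tensor on M^n such that in local coordinates (x¹,…,x^r, y^{r+1},…,y^n) both have block-diagonal form g = diag(g1(x,y), g2(x,y)) and L = diag(L1(x), L2(y)). Then the compatibility equation ∇_u L = (1/2)(u⊗l + (u⊗l)^*) holds for all vectors u tangent to the x-coordinate distribution D1 if and only if the following three conditions hold: (1) for each fixed y, the metric g1(·,y) and the tensor L1 are compatible on the leaf {y = const}; (2) for all indices α, j, k: (g1^{-1} ∂_{y^β} g1)^j_k (L2)^β_α − (L1)^j_m (g1^{-1} ∂_{y^α} g1)^m_k = δ^j_k · ∂_{y^α}(tr L2) (summation over β and m); (3) for every k = 1,…,r: (g2^{-1} ∂_{x^k} g2)·L2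 − L2·(g2^{-1} ∂_{x^k} g2) = 0. -/
open Matrix Polynomial Filter

noncomputable section

variable {ι : Type} [Fintype ι] [DecidableEq ι]

/-- The Lie derivative of the Christoffel symbols of `g` along a vector field `v`:
`(𝓛_v Γ)^i_{jk} = v^m ∂_m Γ^i_{jk} − (∂_m v^i) Γ^m_{jk} + (∂_j v^m) Γ^i_{mk}
  + (∂_k v^m) Γ^i_{jm} + ∂_j ∂_k v^i`. -/
def lieDerivGamma (g : (ι → ℝ) → Matrix ι ι ℝ) (v : (ι → ℝ) → ι → ℝ)
    (x : ι → ℝ) (i j k : ι) : ℝ :=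
  (∑ m, v x m * pd m (fun y => christoffel g y i j k) x)
  - (∑ m, pd m (fun y => v y i) x * christoffel g x m j k)
  + (∑ m, pd j (fun y => v y m) x * christoffel g x i m k)
  + (∑ m, pd k (fun y => v y m) x * christoffel g x i j m)
  + pd j (fun y => pd k (fun z => v z i) y) x

/-- `v` is a projective vector field for `g` on `U`: its local flow takes
unparametrized geodesics to geodesics; equivalently, the Lie derivative of the
Levi-Civita connection of `g` along `v` is of the projective form
`(𝓛_v Γ)^i_{jk} = δ^i_j φ_k + δ^i_k φ_j` for some 1-form `φ`. -/
def IsProjectiveVF (g : (ι → ℝ) → Matrix ι ι ℝ) (v : (ι → ℝ) → ι → ℝ)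
    (U : Set (ι → ℝ)) : Prop :=
  ContDiffOn ℝ (⊤ : ℕ∞) v U ∧
  ∃ φ : (ι → ℝ) → ι → ℝ, ∀ x ∈ U, ∀ i j k : ι,
    lieDerivGamma g v x i j k
      = (if i = j then φ x k else 0) + (if i = k then φ x j else 0)

/-- The Lie derivative of the metric `g` (a (0,2)-tensor) along `v`. -/
def lieDerivMetric (g : (ι → ℝ) → Matrix ι ι ℝ) (v : (ι → ℝ) → ι → ℝ)
    (x : ι → ℝ) : Matrix ι ι ℝ :=
  Matrix.of fun i j =>
    (∑ m, v x m * pd m (fun y => g y i j) x)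
    + (∑ m, g x m j * pd i (fun y => v y m) x)
    + (∑ m, g x i m * pd j (fun y => v y m) x)

/-- The covariant derivative `∇_r L^i_j` of a (1,1)-tensor w.r.t. the Levi-Civita
connection of `g`. -/
def covDerivT (g L : (ι → ℝ) → Matrix ι ι ℝ) (x : ι → ℝ) (r i j : ι) : ℝ :=
  pd r (fun y => L y i j) x
  + (∑ m, christoffel g x i r m * L x m j)
  - (∑ m, christoffel g x m r j * L x i m)

/-- `g` and `L` satisfy the compatibility equation (24):
`∇_r L^i_j = ½ (δ^i_r l_j + g^{is} l_s g_{rj})` with `l = d tr L`;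
equivalently `g` and `ḡ = (det L)⁻¹ g L⁻¹` are geodesically equivalent. -/
def Compatible (g L : (ι → ℝ) → Matrix ι ι ℝ) (U : Set (ι → ℝ)) : Prop :=
  ∀ x ∈ U, ∀ r i j : ι,
    covDerivT g L x r i j
      = (1 / 2) * ((if i = r then 1 else 0) * pd j (fun y => (L y).trace) x
          + (∑ s, (g x)⁻¹ i s * pd s (fun y => (L y).trace) x) * g x r j)

/-- The leaf `{y = const}` through `p`: the first `r` coordinates vary. -/
def slice1 {n r : ℕ} (hr : r ≤ n) (p : Fin n → ℝ) (z : Fin r → ℝ) : Fin n → ℝ :=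
  fun i => if h : (i : ℕ) < r then z ⟨(i : ℕ), h⟩ else p i

/-- The leaf `{x = const}` through `p`: the last `n - r` coordinates vary. -/
def slice2 {n : ℕ} (r : ℕ) (p : Fin n → ℝ) (z : Fin (n - r) → ℝ) : Fin n → ℝ :=
  fun i => if h : r ≤ (i : ℕ) then z ⟨(i : ℕ) - r, by have := i.isLt; omega⟩ else p i

/-- Restriction of a matrix-valued field to the first block along the leaf `{y = const}`. -/
def blk1 {n r : ℕ} (hr : r ≤ n) (A : (Fin n → ℝ) → Matrix (Fin n) (Fin n) ℝ)
    (p : Fin n → ℝ) : (Fin r → ℝ) → Matrix (Fin r) (Fin r) ℝ :=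
  fun z => Matrix.of fun i j => A (slice1 hr p z) (inj1 hr i) (inj1 hr j)

/-- Restriction of a matrix-valued field to the second block along the leaf `{x = const}`. -/
def blk2 {n : ℕ} (r : ℕ) (A : (Fin n → ℝ) → Matrix (Fin n) (Fin n) ℝ)
    (p : Fin n → ℝ) : (Fin (n - r) → ℝ) → Matrix (Fin (n - r)) (Fin (n - r)) ℝ :=
  fun z => Matrix.of fun i j => A (slice2 r p z) (inj2 i) (inj2 j)

/-!
In the direction `∂_k` the compatibility equation says that the operator
`T = ∂_k L + [Γ_k, L] - ½ (∂_k ⊗ l + (∂_k ⊗ l)^*)` vanishes. Since `∇g = 0`, this `T` is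
`g`-self-adjoint, so for block-diagonal `g` its lower-left block vanishes as soon as its upper-right
block does. For `∂_k` tangent to `D₁`, the upper-left block of `T` is the same operator for
`(g₁, L₁)` on the leaf, because `L₂` does not contribute to `∂_x tr L`. In the upper-right and
lower-right blocks `Γ_k` has the entries `½ (g⁻¹ ∂_β g)^j_k` and `½ (g⁻¹ ∂_k g)^α_β`, and these two
blocks of the equation `T = 0` are conditions 2 and 3.
-/

open scoped Topology

/-- The matrix `A` is block-diagonal with respect to the splitting of its index set into `s` and
the complement of `s`. -/
def IsBlockDiag {m R : Type*} [Zero R] (s : Set m) (A : Matrix m m R) : Prop :=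
  ∀ ⦃i⦄, i ∈ s → ∀ ⦃j⦄, j ∉ s → A i j = 0 ∧ A j i = 0

namespace IsBlockDiag

lemma apply_eq_zero {m R : Type*} [Zero R] {s : Set m} {A : Matrix m m R} (hA : IsBlockDiag s A)
    {i j : m} (hij : ¬(i ∈ s ↔ j ∈ s)) : A i j = 0 := by
  by_cases hi : i ∈ s
  · exact (hA hi fun hj => hij (iff_of_true hi hj)).1
  · by_cases hj : j ∈ s
    · exact (hA hj hi).2
    · exact absurd (iff_of_false hi hj) hij

variable {m l R : Type*} [Fintype m] [CommRing R] {s : Set m} {A : Matrix m m R}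

lemma iff_commute_diagonal_indicator [DecidableEq m] :
    IsBlockDiag s A ↔ Commute (diagonal (s.indicator 1)) A := by
  simp only [commute_iff_eq, ← Matrix.ext_iff, diagonal_mul, mul_diagonal]
  constructor
  · intro hA i j
    by_cases hij : i ∈ s ↔ j ∈ s
    · by_cases hj : j ∈ s <;> simp [hij, hj]
    · simp [hA.apply_eq_zero hij]
  · intro h i hi j hj
    have hij : A i j = 0 := by simpa [hi, hj] using h i j
    have hji : 0 = A j i := by simpa [hi, hj] using h j i
    exact ⟨hij, hji.symm⟩

lemma inv [DecidableEq m] (hA : IsBlockDiag s A) (hdet : IsUnit A.det) : IsBlockDiag s A⁻¹ := by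
  rw [iff_commute_diagonal_indicator] at hA ⊢
  exact Commute.units_inv_right (u := A.nonsingInvUnit hdet) hA

lemma mul_apply_congr (hA : IsBlockDiag s A) {B C : Matrix m l R} {i : m} {j : l}
    (h : ∀ a, (a ∈ s ↔ i ∈ s) → B a j = C a j) : (A * B) i j = (A * C) i j := by
  simp only [mul_apply]
  refine Finset.sum_congr rfl fun a _ => ?_
  by_cases ha : i ∈ s ↔ a ∈ s
  · rw [h a ha.symm]
  · rw [hA.apply_eq_zero ha, zero_mul, zero_mul]

lemma apply_mul_congr (hA : IsBlockDiag s A) {B C : Matrix l m R} {i : l} {j : m}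
    (h : ∀ a, (a ∈ s ↔ j ∈ s) → B i a = C i a) : (B * A) i j = (C * A) i j := by
  simp only [mul_apply]
  refine Finset.sum_congr rfl fun a _ => ?_
  by_cases ha : a ∈ s ↔ j ∈ s
  · rw [h a ha]
  · rw [hA.apply_eq_zero ha, mul_zero, mul_zero]

lemma lie_apply_eq_mul (hA : IsBlockDiag s A) {B C : Matrix m m R} {c : R}
    {i j : m} (h : ∀ a b, (a ∈ s ↔ i ∈ s) → (b ∈ s ↔ j ∈ s) → B a b = c * C a b) :
    ⁅B, A⁆ i j = c * ⁅C, A⁆ i j := by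
  have hBA : (B * A) i j = ((c • C) * A) i j := hA.apply_mul_congr fun a ha => h i a Iff.rfl ha
  have hAB : (A * B) i j = (A * (c • C)) i j := hA.mul_apply_congr fun a ha => h a j ha Iff.rfl
  rw [Ring.lie_def, Ring.lie_def, Matrix.sub_apply, Matrix.sub_apply, hBA, hAB, Matrix.smul_mul,
    Matrix.mul_smul, Matrix.smul_apply, Matrix.smul_apply, smul_eq_mul, smul_eq_mul, mul_sub]

lemma lower_eq_zero_of_isSymm_mul [DecidableEq m] {T : Matrix m m R} (hA : IsBlockDiag s A)
    (hdet : IsUnit A.det) (hAsymm : A.IsSymm) (hAT : (A * T).IsSymm)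
    (hT : ∀ i ∈ s, ∀ j ∉ s, T i j = 0) : ∀ i ∉ s, ∀ j ∈ s, T i j = 0 := by
  intro i hi j hj
  have hadj : T = A⁻¹ * (Tᵀ * A) := by
    rw [← congrArg (Tᵀ * ·) hAsymm.eq, ← transpose_mul, hAT.eq,
      nonsing_inv_mul_cancel_left _ _ hdet]
  have hblock : ∀ a, (a ∈ s ↔ i ∈ s) → (Tᵀ * A) a j = (0 : Matrix m m R) a j := by
    intro a ha
    rw [hA.apply_mul_congr (C := 0) fun b hb => hT b (hb.2 hj) a (hi ∘ ha.1), Matrix.zero_mul]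
  rw [hadj, (hA.inv hdet).mul_apply_congr hblock, Matrix.mul_zero, Matrix.zero_apply]

variable {κ : Type*} [Fintype κ] {e : κ → m}

lemma submatrix_mul (he : e.Injective) (hA : IsBlockDiag (Set.range e) A) (B : Matrix m m R) :
    (A * B).submatrix e e = A.submatrix e e * B.submatrix e e := by
  ext i j
  refine (Fintype.sum_of_injective e he _ _ (fun a ha => ?_) fun _ => rfl).symm
  exact mul_eq_zero_of_left (hA ⟨i, rfl⟩ ha).1 _

lemma mul_submatrix (he : e.Injective) (hA : IsBlockDiag (Set.range e) A) (B : Matrix m m R) :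
    (B * A).submatrix e e = B.submatrix e e * A.submatrix e e := by
  ext i j
  refine (Fintype.sum_of_injective e he _ _ (fun a ha => ?_) fun _ => rfl).symm
  exact mul_eq_zero_of_right _ (hA ⟨j, rfl⟩ ha).2

lemma mulVec_comp (he : e.Injective) (hA : IsBlockDiag (Set.range e) A) (v : m → R) :
    (A *ᵥ v) ∘ e = A.submatrix e e *ᵥ (v ∘ e) := by
  ext i
  refine (Fintype.sum_of_injective e he _ _ (fun a ha => ?_) fun _ => rfl).symm
  exact mul_eq_zero_of_left (hA ⟨i, rfl⟩ ha).1 _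

lemma lie_submatrix (he : e.Injective) (hA : IsBlockDiag (Set.range e) A) (B : Matrix m m R) :
    ⁅B, A⁆.submatrix e e = ⁅B.submatrix e e, A.submatrix e e⁆ := by
  rw [Ring.lie_def, Ring.lie_def, Matrix.submatrix_sub, Pi.sub_apply, Pi.sub_apply,
    hA.submatrix_mul he, hA.mul_submatrix he]

lemma inv_submatrix [DecidableEq m] [DecidableEq κ] (he : e.Injective)
    (hA : IsBlockDiag (Set.range e) A) (hdet : IsUnit A.det) :
    A⁻¹.submatrix e e = (A.submatrix e e)⁻¹ := by
  refine (inv_eq_right_inv ?_).symm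
  rw [← hA.submatrix_mul he, mul_nonsing_inv _ hdet, submatrix_one _ he]

end IsBlockDiag

section PartialDerivatives

variable {κ : Type} [DecidableEq κ] {x : κ → ℝ}

lemma pd_congr {F G : (κ → ℝ) → ℝ} (h : F =ᶠ[𝓝 x] G) (k : κ) : pd k F x = pd k G x := by
  rw [pd, pd, h.fderiv_eq]

lemma pd_const (k : κ) (c : ℝ) (x : κ → ℝ) : pd k (fun _ => c) x = 0 := by
  simp [pd]

/-- The entrywise partial derivative `∂_k A` of a matrix-valued function. -/
def pdMatrix {m : Type*} (k : κ) (A : (κ → ℝ) → Matrix m m ℝ) (x : κ → ℝ) : Matrix m m ℝ :=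
  Matrix.of fun i j => pd k (fun y => A y i j) x

lemma isSymm_pdMatrix {m : Type*} {A : (κ → ℝ) → Matrix m m ℝ}
    (hA : ∀ᶠ y in 𝓝 x, (A y).IsSymm) (k : κ) : (pdMatrix k A x).IsSymm :=
  Matrix.IsSymm.ext fun i j => pd_congr (hA.mono fun _ hy => hy.apply i j) k

lemma isBlockDiag_pdMatrix {m : Type*} {A : (κ → ℝ) → Matrix m m ℝ} {s : Set m}
    (hA : ∀ᶠ y in 𝓝 x, IsBlockDiag s (A y)) (k : κ) : IsBlockDiag s (pdMatrix k A x) :=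
  fun _ hi _ hj =>
    ⟨(pd_congr (hA.mono fun _ hy => (hy hi hj).1) k).trans (pd_const k 0 x),
      (pd_congr (hA.mono fun _ hy => (hy hi hj).2) k).trans (pd_const k 0 x)⟩

variable [Finite κ]

lemma pd_sum {m : Type*} {t : Finset m} {F : m → (κ → ℝ) → ℝ}
    (hF : ∀ i ∈ t, DifferentiableAt ℝ (F i) x) (k : κ) :
    pd k (fun y => ∑ i ∈ t, F i y) x = ∑ i ∈ t, pd k (F i) x := by
  cases nonempty_fintype κ
  simp only [pd]
  rw [fderiv_fun_sum hF, _root_.sum_apply]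

lemma pd_mul {F G : (κ → ℝ) → ℝ} (hF : DifferentiableAt ℝ F x) (hG : DifferentiableAt ℝ G x)
    (k : κ) : pd k (fun y => F y * G y) x = pd k F x * G x + F x * pd k G x := by
  cases nonempty_fintype κ
  simp only [pd, fderiv_fun_mul hF hG, _root_.add_apply, _root_.smul_apply, smul_eq_mul]
  ring

variable {m : Type*} [Fintype m] {A B : (κ → ℝ) → Matrix m m ℝ}

lemma pdMatrix_mul (hA : ∀ i j, DifferentiableAt ℝ (fun y => A y i j) x)
    (hB : ∀ i j, DifferentiableAt ℝ (fun y => B y i j) x) (k : κ) :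
    pdMatrix k (fun y => A y * B y) x = pdMatrix k A x * B x + A x * pdMatrix k B x := by
  cases nonempty_fintype κ
  ext i j
  have hAB : ∀ a, DifferentiableAt ℝ (fun y => A y i a * B y a j) x :=
    fun a => (hA i a).mul (hB a j)
  calc pd k (fun y => (A y * B y) i j) x
      = ∑ a, pd k (fun y => A y i a * B y a j) x := pd_sum (fun a _ => hAB a) k
    _ = ∑ a, (pdMatrix k A x i a * B x a j + A x i a * pdMatrix k B x a j) :=
        Finset.sum_congr rfl fun a _ => pd_mul (hA i a) (hB a j) k
    _ = (pdMatrix k A x * B x + A x * pdMatrix k B x) i j := Finset.sum_add_distrib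

lemma pd_trace (hA : ∀ i, DifferentiableAt ℝ (fun y => A y i i) x) (k : κ) :
    pd k (fun y => (A y).trace) x = (pdMatrix k A x).trace :=
  pd_sum (fun i _ => hA i) k

end PartialDerivatives

section Connection

variable {κ : Type} [DecidableEq κ]

/-- The Christoffel symbols of the first kind `Γ_{m,kj}` of `g`, as a matrix in `m` and `j`. -/
def christoffelFirstKind (g : (κ → ℝ) → Matrix κ κ ℝ) (k : κ) (x : κ → ℝ) : Matrix κ κ ℝ :=
  (1 / 2 : ℝ) • Matrix.of fun m j =>
    pd k (fun y => g y m j) x + pd j (fun y => g y m k) x - pd m (fun y => g y k j) x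

/-- This is `∇g = 0`, with lowered indices. -/
lemma christoffelFirstKind_add_transpose {g : (κ → ℝ) → Matrix κ κ ℝ} {x : κ → ℝ}
    (hg : ∀ᶠ y in 𝓝 x, (g y).IsSymm) (k : κ) :
    christoffelFirstKind g k x + (christoffelFirstKind g k x)ᵀ = pdMatrix k g x := by
  have hpd : ∀ a i j, pd a (fun y => g y i j) x = pd a (fun y => g y j i) x :=
    fun a i j => (isSymm_pdMatrix hg a).apply j i
  ext m j
  simp only [christoffelFirstKind, pdMatrix, Matrix.add_apply, Matrix.transpose_apply,
    Matrix.smul_apply, Matrix.of_apply, smul_eq_mul]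
  rw [hpd k j m, hpd j k m, hpd m k j]
  ring

variable {g L : (ι → ℝ) → Matrix ι ι ℝ} {x : ι → ℝ}

/-- The connection matrix `(Γ_k)^i_j = Γ^i_{kj}` of the Levi-Civita connection of `g`, so that
`∇_k = ∂_k + Γ_k` on vector fields. -/
def connectionMatrix (g : (ι → ℝ) → Matrix ι ι ℝ) (k : ι) (x : ι → ℝ) : Matrix ι ι ℝ :=
  (g x)⁻¹ * christoffelFirstKind g k x

lemma connectionMatrix_apply (k i j : ι) : connectionMatrix g k x i j = christoffel g x i k j := by
  rw [connectionMatrix, christoffelFirstKind, Matrix.mul_smul]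
  rfl

lemma of_covDerivT (k : ι) :
    Matrix.of (covDerivT g L x k) = pdMatrix k L x + ⁅connectionMatrix g k x, L x⁆ := by
  ext i j
  simp only [covDerivT, pdMatrix, Ring.lie_def, Matrix.of_apply, Matrix.add_apply,
    Matrix.sub_apply, mul_apply, connectionMatrix_apply, mul_comm (L x i _), add_sub_assoc]

lemma isSymm_mul_covDerivT (hgdiff : ∀ i j, DifferentiableAt ℝ (fun y => g y i j) x)
    (hLdiff : ∀ i j, DifferentiableAt ℝ (fun y => L y i j) x)
    (hg : ∀ᶠ y in 𝓝 x, (g y).IsSymm) (hdet : IsUnit (g x).det)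
    (hgL : ∀ᶠ y in 𝓝 x, (g y * L y).IsSymm) (k : ι) :
    (g x * Matrix.of (covDerivT g L x k)).IsSymm := by
  set C := christoffelFirstKind g k x with hC
  have hgC : g x * connectionMatrix g k x = C := mul_nonsing_inv_cancel_left _ _ hdet
  have hgLx : (L x)ᵀ * g x = g x * L x := by
    rw [← hgL.self_of_nhds.eq, transpose_mul, hg.self_of_nhds.eq]
  have hLC : g x * (L x * connectionMatrix g k x) = (L x)ᵀ * C := by
    rw [← hgC, ← Matrix.mul_assoc, ← Matrix.mul_assoc, hgLx]
  have hcov : g x * Matrix.of (covDerivT g L x k)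
      = pdMatrix k (fun y => g y * L y) x - (Cᵀ * L x + (L x)ᵀ * C) := by
    rw [of_covDerivT, pdMatrix_mul hgdiff hLdiff, ← christoffelFirstKind_add_transpose hg, ← hC,
      Ring.lie_def, Matrix.mul_add, Matrix.mul_sub, hLC, ← Matrix.mul_assoc, hgC, Matrix.add_mul]
    abel
  rw [hcov]
  refine (isSymm_pdMatrix hgL k).sub ?_
  rw [Matrix.IsSymm, transpose_add, transpose_mul, transpose_mul, transpose_transpose,
    transpose_transpose, add_comm]

end Connection

section Compatibility

variable {g L : (ι → ℝ) → Matrix ι ι ℝ} {x : ι → ℝ}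

/-- The components of the 1-form `l = d tr L`. -/
def dTrace (L : (ι → ℝ) → Matrix ι ι ℝ) (x : ι → ℝ) : ι → ℝ :=
  fun j => pd j (fun y => (L y).trace) x

/-- The defect `∇_u L - ½ (u ⊗ l + (u ⊗ l)^*)` of the compatibility equation in the direction of
the coordinate vector field `u = ∂_k`. -/
def compatDefect (g L : (ι → ℝ) → Matrix ι ι ℝ) (k : ι) (x : ι → ℝ) : Matrix ι ι ℝ :=
  Matrix.of (covDerivT g L x k) - (1 / 2 : ℝ) •
    (vecMulVec (Pi.single k 1) (dTrace L x) + vecMulVec ((g x)⁻¹ *ᵥ dTrace L x) (g x k))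

lemma compatDefect_eq_zero_iff (k : ι) :
    compatDefect g L k x = 0 ↔ ∀ i j, covDerivT g L x k i j
      = (1 / 2) * ((if i = k then 1 else 0) * pd j (fun y => (L y).trace) x
          + (∑ s, (g x)⁻¹ i s * pd s (fun y => (L y).trace) x) * g x k j) := by
  rw [compatDefect, sub_eq_zero, ← Matrix.ext_iff]
  simp only [Matrix.of_apply, Matrix.smul_apply, Matrix.add_apply, vecMulVec_apply,
    Pi.single_apply, smul_eq_mul]
  rfl

lemma compatible_iff_compatDefect_eq_zero {U : Set (ι → ℝ)} :
    Compatible g L U ↔ ∀ x ∈ U, ∀ k, compatDefect g L k x = 0 := by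
  simp only [Compatible, compatDefect_eq_zero_iff]

lemma isSymm_mul_compatDefect (hgdiff : ∀ i j, DifferentiableAt ℝ (fun y => g y i j) x)
    (hLdiff : ∀ i j, DifferentiableAt ℝ (fun y => L y i j) x)
    (hg : ∀ᶠ y in 𝓝 x, (g y).IsSymm) (hdet : IsUnit (g x).det)
    (hgL : ∀ᶠ y in 𝓝 x, (g y * L y).IsSymm) (k : ι) :
    (g x * compatDefect g L k x).IsSymm := by
  have hrow : g x *ᵥ Pi.single k 1 = g x k := by
    ext j
    rw [mulVec_single_one, col_apply, hg.self_of_nhds.apply]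
  rw [compatDefect, Matrix.mul_sub, Matrix.mul_smul, Matrix.mul_add, mul_vecMulVec, mul_vecMulVec,
    mulVec_mulVec, mul_nonsing_inv _ hdet, one_mulVec, hrow]
  refine (isSymm_mul_covDerivT hgdiff hLdiff hg hdet hgL k).sub (Matrix.IsSymm.smul ?_ _)
  rw [Matrix.IsSymm, transpose_add, transpose_vecMulVec, transpose_vecMulVec, add_comm]

end Compatibility

section Blocks

variable {g L : (ι → ℝ) → Matrix ι ι ℝ} {x : ι → ℝ} {s : Set ι} {k : ι}

/-- The operator `g⁻¹ ∂_k g`. -/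
def logPd (g : (ι → ℝ) → Matrix ι ι ℝ) (k : ι) (x : ι → ℝ) : Matrix ι ι ℝ :=
  (g x)⁻¹ * pdMatrix k g x

/-- The `k`-th columns of the operators `g⁻¹ ∂_β g`, assembled into the matrix with entries
`(g⁻¹ ∂_β g)^j_k` in `j` and `β`. -/
def logPdColumn (g : (ι → ℝ) → Matrix ι ι ℝ) (k : ι) (x : ι → ℝ) : Matrix ι ι ℝ :=
  (g x)⁻¹ * Matrix.of fun m β => pd β (fun y => g y m k) x

lemma connectionMatrix_upper (hg : ∀ᶠ y in 𝓝 x, IsBlockDiag s (g y)) (hdet : IsUnit (g x).det)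
    (hk : k ∈ s) {i β : ι} (hi : i ∈ s) (hβ : β ∉ s) :
    connectionMatrix g k x i β = (1 / 2) * logPdColumn g k x i β := by
  change _ = ((1 / 2 : ℝ) • logPdColumn g k x) i β
  rw [connectionMatrix, logPdColumn, ← Matrix.mul_smul]
  refine (hg.self_of_nhds.inv hdet).mul_apply_congr fun m hm => ?_
  have h1 : pd k (fun y => g y m β) x = 0 := (isBlockDiag_pdMatrix hg k (hm.2 hi) hβ).1
  have h2 : pd m (fun y => g y k β) x = 0 := (isBlockDiag_pdMatrix hg m hk hβ).1
  simp only [christoffelFirstKind, Matrix.smul_apply, Matrix.of_apply, h1, h2, zero_add, sub_zero]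

lemma connectionMatrix_complement (hg : ∀ᶠ y in 𝓝 x, IsBlockDiag s (g y))
    (hdet : IsUnit (g x).det) (hk : k ∈ s) {α β : ι} (hα : α ∉ s) (hβ : β ∉ s) :
    connectionMatrix g k x α β = (1 / 2) * logPd g k x α β := by
  change _ = ((1 / 2 : ℝ) • logPd g k x) α β
  rw [connectionMatrix, logPd, ← Matrix.mul_smul]
  refine (hg.self_of_nhds.inv hdet).mul_apply_congr fun m hm => ?_
  have h1 : pd β (fun y => g y m k) x = 0 := (isBlockDiag_pdMatrix hg β hk (hα ∘ hm.1)).2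
  have h2 : pd m (fun y => g y k β) x = 0 := (isBlockDiag_pdMatrix hg m hk hβ).1
  simp only [christoffelFirstKind, pdMatrix, Matrix.smul_apply, Matrix.of_apply, h1, h2, add_zero,
    sub_zero]

lemma compatDefect_upper (hg : ∀ᶠ y in 𝓝 x, IsBlockDiag s (g y)) (hdet : IsUnit (g x).det)
    (hL : ∀ᶠ y in 𝓝 x, IsBlockDiag s (L y)) (hk : k ∈ s) {i α : ι} (hi : i ∈ s) (hα : α ∉ s) :
    compatDefect g L k x i α = (1 / 2) *
      (⁅logPdColumn g k x, L x⁆ i α - (if i = k then 1 else 0) * dTrace L x α) := by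
  have hpdL : pdMatrix k L x i α = 0 := (isBlockDiag_pdMatrix hL k hi hα).1
  have hgk : g x k α = 0 := (hg.self_of_nhds hk hα).1
  have hlie : ⁅connectionMatrix g k x, L x⁆ i α = (1 / 2) * ⁅logPdColumn g k x, L x⁆ i α :=
    hL.self_of_nhds.lie_apply_eq_mul fun a b ha hb =>
      connectionMatrix_upper hg hdet hk (ha.2 hi) (hα ∘ hb.1)
  rw [compatDefect, of_covDerivT, Matrix.sub_apply, Matrix.add_apply, hpdL, hlie]
  simp only [Matrix.smul_apply, Matrix.add_apply, vecMulVec_apply, Pi.single_apply, hgk,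
    smul_eq_mul]
  ring

lemma compatDefect_complement (hg : ∀ᶠ y in 𝓝 x, IsBlockDiag s (g y)) (hdet : IsUnit (g x).det)
    (hL : IsBlockDiag s (L x)) (hk : k ∈ s) {α γ : ι} (hα : α ∉ s) (hγ : γ ∉ s)
    (hpdL : pdMatrix k L x α γ = 0) :
    compatDefect g L k x α γ = (1 / 2) * ⁅logPd g k x, L x⁆ α γ := by
  have hgk : g x k γ = 0 := (hg.self_of_nhds hk hγ).1
  have hαk : α ≠ k := fun h => hα (h ▸ hk)
  have hlie : ⁅connectionMatrix g k x, L x⁆ α γ = (1 / 2) * ⁅logPd g k x, L x⁆ α γ :=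
    hL.lie_apply_eq_mul fun a b ha hb =>
      connectionMatrix_complement hg hdet hk (hα ∘ ha.1) (hγ ∘ hb.1)
  rw [compatDefect, of_covDerivT, Matrix.sub_apply, Matrix.add_apply, hpdL, hlie]
  simp only [Matrix.smul_apply, Matrix.add_apply, vecMulVec_apply, Pi.single_apply, hgk,
    if_neg hαk, smul_eq_mul]
  ring

end Blocks

section LeafDerivatives

lemma extend_comp_self {ι κ R : Type*} {e : κ → ι} (he : e.Injective) (x : ι → R) :
    Function.extend e (x ∘ e) x = x := by
  ext i
  by_cases hi : ∃ a, e a = i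
  · obtain ⟨a, rfl⟩ := hi
    exact he.extend_apply _ _ _
  · exact Function.extend_apply' _ _ _ hi

lemma extend_single_zero {ι κ : Type*} [DecidableEq ι] [DecidableEq κ] {e : κ → ι}
    (he : e.Injective) (k : κ) (c : ℝ) :
    Function.extend e (Pi.single k c) 0 = Pi.single (e k) c := by
  ext i
  by_cases hi : ∃ a, e a = i
  · obtain ⟨a, rfl⟩ := hi
    simp only [he.extend_apply, Pi.single_apply, he.eq_iff]
  · rw [Function.extend_apply' _ _ _ hi, Pi.single_eq_of_ne (fun h => hi ⟨k, h.symm⟩)]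
    rfl

lemma hasFDerivAt_extend {ι κ : Type*} [Finite ι] [Finite κ] (e : κ → ι) (p : ι → ℝ)
    (z : κ → ℝ) :
    HasFDerivAt (fun w => Function.extend e w p)
      (Function.ExtendByZero.linearMap ℝ e).toContinuousLinearMap z := by
  cases nonempty_fintype ι
  cases nonempty_fintype κ
  have haff : (fun w : κ → ℝ => Function.extend e w p) = fun w =>
      (Function.ExtendByZero.linearMap ℝ e).toContinuousLinearMap w
        + Function.extend e (0 : κ → ℝ) p := by
    ext1 w
    exact (congrArg₂ (Function.extend e) (add_zero w) (zero_add p)).symm.trans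
      (Function.extend_add e w 0 0 p)
  rw [haff]
  exact (ContinuousLinearMap.hasFDerivAt _).add_const _

/-- The restriction of the block of `A` with indices `e` to the leaf through `p` along which the
coordinates with indices `e` vary. -/
def leafBlock {ι κ : Type*} (e : κ → ι) (A : (ι → ℝ) → Matrix ι ι ℝ) (p : ι → ℝ) (z : κ → ℝ) :
    Matrix κ κ ℝ :=
  (A (Function.extend e z p)).submatrix e e

variable {ι κ : Type} [Finite ι] [DecidableEq ι] [Finite κ] [DecidableEq κ] {e : κ → ι}
  {p : ι → ℝ} {z : κ → ℝ}

lemma pd_comp_extend (he : e.Injective) {F : (ι → ℝ) → ℝ}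
    (hF : DifferentiableAt ℝ F (Function.extend e z p)) (k : κ) :
    pd k (fun w => F (Function.extend e w p)) z = pd (e k) F (Function.extend e z p) := by
  cases nonempty_fintype ι
  cases nonempty_fintype κ
  have hcomp := hF.hasFDerivAt.comp z (hasFDerivAt_extend e p z)
  calc pd k (fun w => F (Function.extend e w p)) z
      = fderiv ℝ F (Function.extend e z p) (Function.extend e (Pi.single k 1) 0) :=
        congrArg (· (Pi.single k 1)) hcomp.fderiv
    _ = pd (e k) F (Function.extend e z p) := by rw [extend_single_zero he, pd]

lemma pdMatrix_leafBlock (he : e.Injective) {A : (ι → ℝ) → Matrix ι ι ℝ}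
    (hA : ∀ i j, DifferentiableAt ℝ (fun y => A y i j) (Function.extend e z p)) (k : κ) :
    pdMatrix k (leafBlock e A p) z
      = (pdMatrix (e k) A (Function.extend e z p)).submatrix e e := by
  ext i j
  exact pd_comp_extend he (hA (e i) (e j)) k

end LeafDerivatives

section Leaves

variable {κ : Type} [Fintype κ] [DecidableEq κ] {e : κ → ι} {p : ι → ℝ} {z : κ → ℝ}
  {g L : (ι → ℝ) → Matrix ι ι ℝ}

lemma connectionMatrix_leafBlock (he : e.Injective)
    (hgdiff : ∀ i j, DifferentiableAt ℝ (fun y => g y i j) (Function.extend e z p))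
    (hg : IsBlockDiag (Set.range e) (g (Function.extend e z p)))
    (hdet : IsUnit (g (Function.extend e z p)).det) (k : κ) :
    connectionMatrix (leafBlock e g p) k z
      = (connectionMatrix g (e k) (Function.extend e z p)).submatrix e e := by
  have hfirst : christoffelFirstKind (leafBlock e g p) k z
      = (christoffelFirstKind g (e k) (Function.extend e z p)).submatrix e e := by
    ext i j
    have hpd : ∀ a b c, pd c (fun w => leafBlock e g p w a b) z
        = pd (e c) (fun y => g y (e a) (e b)) (Function.extend e z p) :=
      fun a b c => pd_comp_extend he (hgdiff (e a) (e b)) c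
    simp only [christoffelFirstKind, Matrix.smul_apply, Matrix.of_apply, submatrix_apply, hpd]
  rw [connectionMatrix, connectionMatrix, (hg.inv hdet).submatrix_mul he, hfirst,
    hg.inv_submatrix he hdet, leafBlock]

lemma dTrace_leafBlock (he : e.Injective)
    (hLdiff : ∀ i j, DifferentiableAt ℝ (fun y => L y i j) (Function.extend e z p))
    (hL : ∀ i ∉ Set.range e, ∀ k, pd (e k) (fun y => L y i i) (Function.extend e z p) = 0) :
    dTrace (leafBlock e L p) z = dTrace L (Function.extend e z p) ∘ e := by
  ext k
  have hleaf : ∀ i, DifferentiableAt ℝ (fun w => leafBlock e L p w i i) z := fun i =>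
    (hLdiff (e i) (e i)).comp (g := fun y => L y (e i) (e i)) z
      (hasFDerivAt_extend e p z).differentiableAt
  calc pd k (fun w => (leafBlock e L p w).trace) z
      = ((pdMatrix (e k) L (Function.extend e z p)).submatrix e e).trace := by
        rw [pd_trace hleaf, pdMatrix_leafBlock he hLdiff]
    _ = (pdMatrix (e k) L (Function.extend e z p)).trace :=
        Fintype.sum_of_injective e he _ _ (fun i hi => hL i hi k) fun _ => rfl
    _ = dTrace L (Function.extend e z p) (e k) := (pd_trace (fun i => hLdiff i i) (e k)).symm

lemma compatDefect_leafBlock (he : e.Injective)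
    (hgdiff : ∀ i j, DifferentiableAt ℝ (fun y => g y i j) (Function.extend e z p))
    (hLdiff : ∀ i j, DifferentiableAt ℝ (fun y => L y i j) (Function.extend e z p))
    (hg : IsBlockDiag (Set.range e) (g (Function.extend e z p)))
    (hdet : IsUnit (g (Function.extend e z p)).det)
    (hL : IsBlockDiag (Set.range e) (L (Function.extend e z p)))
    (hLpd : ∀ i ∉ Set.range e, ∀ k, pd (e k) (fun y => L y i i) (Function.extend e z p) = 0)
    (k : κ) :
    compatDefect (leafBlock e g p) (leafBlock e L p) k z
      = (compatDefect g L (e k) (Function.extend e z p)).submatrix e e := by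
  set x := Function.extend e z p
  have hcov : Matrix.of (covDerivT (leafBlock e g p) (leafBlock e L p) z k)
      = (Matrix.of (covDerivT g L x (e k))).submatrix e e := by
    rw [of_covDerivT, of_covDerivT, pdMatrix_leafBlock he hLdiff,
      connectionMatrix_leafBlock he hgdiff hg hdet, leafBlock, ← hL.lie_submatrix he]
    rfl
  have hsingle : (Pi.single k 1 : κ → ℝ) = Pi.single (e k) 1 ∘ e := by
    ext i
    simp only [Function.comp_apply, Pi.single_apply, he.eq_iff]
  have hgrad : (leafBlock e g p z)⁻¹ *ᵥ dTrace (leafBlock e L p) z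
      = ((g x)⁻¹ *ᵥ dTrace L x) ∘ e := by
    rw [(hg.inv hdet).mulVec_comp he, hg.inv_submatrix he hdet, dTrace_leafBlock he hLdiff hLpd,
      leafBlock]
  rw [compatDefect, hcov, hsingle, hgrad, dTrace_leafBlock he hLdiff hLpd]
  rfl

end Leaves

section Splitting

variable {g L : (ι → ℝ) → Matrix ι ι ℝ}

lemma compatDefect_eq_zero_iff_blocks {x : ι → ℝ} {s : Set ι} {k : ι}
    (hgdiff : ∀ i j, DifferentiableAt ℝ (fun y => g y i j) x)
    (hLdiff : ∀ i j, DifferentiableAt ℝ (fun y => L y i j) x)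
    (hgsymm : ∀ᶠ y in 𝓝 x, (g y).IsSymm) (hdet : IsUnit (g x).det)
    (hgL : ∀ᶠ y in 𝓝 x, (g y * L y).IsSymm) (hg : ∀ᶠ y in 𝓝 x, IsBlockDiag s (g y))
    (hL : ∀ᶠ y in 𝓝 x, IsBlockDiag s (L y))
    (hLpd : ∀ i ∉ s, ∀ j ∉ s, pd k (fun y => L y i j) x = 0) (hk : k ∈ s) :
    compatDefect g L k x = 0 ↔
      (∀ i ∈ s, ∀ j ∈ s, compatDefect g L k x i j = 0) ∧
      (∀ i ∈ s, ∀ α ∉ s,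
        ⁅logPdColumn g k x, L x⁆ i α = (if i = k then 1 else 0) * dTrace L x α) ∧
      (∀ α ∉ s, ∀ γ ∉ s, ⁅logPd g k x, L x⁆ α γ = 0) := by
  have hupper : ∀ i ∈ s, ∀ α ∉ s, compatDefect g L k x i α = 0 ↔
      ⁅logPdColumn g k x, L x⁆ i α = (if i = k then 1 else 0) * dTrace L x α := by
    intro i hi α hα
    rw [compatDefect_upper hg hdet hL hk hi hα, mul_eq_zero_iff_left (by norm_num), sub_eq_zero]
  have hcompl : ∀ α ∉ s, ∀ γ ∉ s, compatDefect g L k x α γ = 0 ↔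
      ⁅logPd g k x, L x⁆ α γ = 0 := by
    intro α hα γ hγ
    rw [compatDefect_complement hg hdet hL.self_of_nhds hk hα hγ (hLpd α hα γ hγ),
      mul_eq_zero_iff_left (by norm_num)]
  constructor
  · intro h
    have h0 : ∀ i j, compatDefect g L k x i j = 0 := fun i j => congrFun₂ h i j
    exact ⟨fun i _ j _ => h0 i j, fun i hi α hα => (hupper i hi α hα).1 (h0 i α),
      fun α hα γ hγ => (hcompl α hα γ hγ).1 (h0 α γ)⟩
  · rintro ⟨hleaf, hcond2, hcond3⟩
    have hright : ∀ i ∈ s, ∀ α ∉ s, compatDefect g L k x i α = 0 :=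
      fun i hi α hα => (hupper i hi α hα).2 (hcond2 i hi α hα)
    have hleft := hg.self_of_nhds.lower_eq_zero_of_isSymm_mul hdet hgsymm.self_of_nhds
      (isSymm_mul_compatDefect hgdiff hLdiff hgsymm hdet hgL k) hright
    ext i j
    by_cases hi : i ∈ s <;> by_cases hj : j ∈ s
    · exact hleaf i hi j hj
    · exact hright i hi j hj
    · exact hleft i hi j hj
    · exact (hcompl i hi j hj).2 (hcond3 i hi j hj)

variable {κ : Type} [Fintype κ] [DecidableEq κ] {e : κ → ι}

lemma compatible_leafBlock_iff {U : Set (ι → ℝ)} (he : e.Injective)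
    (hgdiff : ∀ x ∈ U, ∀ i j, DifferentiableAt ℝ (fun y => g y i j) x)
    (hLdiff : ∀ x ∈ U, ∀ i j, DifferentiableAt ℝ (fun y => L y i j) x)
    (hdet : ∀ x ∈ U, IsUnit (g x).det) (hg : ∀ x ∈ U, IsBlockDiag (Set.range e) (g x))
    (hL : ∀ x ∈ U, IsBlockDiag (Set.range e) (L x))
    (hLpd : ∀ x ∈ U, ∀ i ∉ Set.range e, ∀ k, pd (e k) (fun y => L y i i) x = 0) :
    (∀ p ∈ U, Compatible (leafBlock e g p) (leafBlock e L p) {z | Function.extend e z p ∈ U}) ↔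
      ∀ x ∈ U, ∀ k i j, compatDefect g L (e k) x (e i) (e j) = 0 := by
  have hdefect : ∀ p z, Function.extend e z p ∈ U → ∀ k,
      compatDefect (leafBlock e g p) (leafBlock e L p) k z
        = (compatDefect g L (e k) (Function.extend e z p)).submatrix e e :=
    fun p z hz => compatDefect_leafBlock he (hgdiff _ hz) (hLdiff _ hz) (hg _ hz) (hdet _ hz)
      (hL _ hz) (hLpd _ hz)
  simp only [compatible_iff_compatDefect_eq_zero]
  constructor
  · intro h x hx k i j
    have hz : Function.extend e (x ∘ e) x ∈ U := (extend_comp_self he x).symm ▸ hx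
    have hleaf := h x hx (x ∘ e) hz k
    rw [hdefect x (x ∘ e) hz k, extend_comp_self he] at hleaf
    exact congrFun₂ hleaf i j
  · intro h p _ z hz k
    rw [hdefect p z hz k]
    ext i j
    exact h _ hz k i j

/-- Here `D₁` is spanned by the coordinate fields with indices in the range of `e`. Since `L₁` may
depend on `y`, condition 2 takes the form with `d_y tr L` in place of `d_y tr L₂`. -/
theorem stmt18_general {U : Set (ι → ℝ)} (he : e.Injective) (hU : IsOpen U)
    (hgdiff : ∀ i j, DifferentiableOn ℝ (fun y => g y i j) U)
    (hLdiff : ∀ i j, DifferentiableOn ℝ (fun y => L y i j) U)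
    (hgsymm : ∀ x ∈ U, (g x).IsSymm) (hdet : ∀ x ∈ U, IsUnit (g x).det)
    (hgL : ∀ x ∈ U, (g x * L x).IsSymm) (hg : ∀ x ∈ U, IsBlockDiag (Set.range e) (g x))
    (hL : ∀ x ∈ U, IsBlockDiag (Set.range e) (L x))
    (hLpd : ∀ x ∈ U, ∀ i ∉ Set.range e, ∀ j ∉ Set.range e, ∀ k ∈ Set.range e,
      pd k (fun y => L y i j) x = 0) :
    (∀ x ∈ U, ∀ k ∈ Set.range e, compatDefect g L k x = 0) ↔
      (∀ p ∈ U, Compatible (leafBlock e g p) (leafBlock e L p)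
        {z | Function.extend e z p ∈ U}) ∧
      (∀ x ∈ U, ∀ j k, j ∈ Set.range e → k ∈ Set.range e → ∀ α ∉ Set.range e,
        ⁅logPdColumn g k x, L x⁆ j α = (if j = k then 1 else 0) * dTrace L x α) ∧
      (∀ x ∈ U, ∀ k ∈ Set.range e, ∀ α γ, α ∉ Set.range e → γ ∉ Set.range e →
        ⁅logPd g k x, L x⁆ α γ = 0) := by
  have hgdiffAt : ∀ x ∈ U, ∀ i j, DifferentiableAt ℝ (fun y => g y i j) x :=
    fun x hx i j => (hgdiff i j).differentiableAt (hU.mem_nhds hx)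
  have hLdiffAt : ∀ x ∈ U, ∀ i j, DifferentiableAt ℝ (fun y => L y i j) x :=
    fun x hx i j => (hLdiff i j).differentiableAt (hU.mem_nhds hx)
  have hnear : ∀ {P : (ι → ℝ) → Prop}, (∀ x ∈ U, P x) → ∀ x ∈ U, ∀ᶠ y in 𝓝 x, P y :=
    fun hP x hx => (hU.eventually_mem hx).mono hP
  have hblocks := fun x (hx : x ∈ U) k (hk : k ∈ Set.range e) =>
    compatDefect_eq_zero_iff_blocks (hgdiffAt x hx) (hLdiffAt x hx) (hnear hgsymm x hx)
      (hdet x hx) (hnear hgL x hx) (hnear hg x hx) (hnear hL x hx)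
      (fun i hi j hj => hLpd x hx i hi j hj k hk) hk
  rw [compatible_leafBlock_iff he hgdiffAt hLdiffAt hdet hg hL
    fun x hx i hi k => hLpd x hx i hi i hi (e k) ⟨k, rfl⟩]
  constructor
  · intro h
    have hparts := fun x hx k hk => (hblocks x hx k hk).1 (h x hx k hk)
    exact ⟨fun x hx k i j => (hparts x hx _ ⟨k, rfl⟩).1 _ ⟨i, rfl⟩ _ ⟨j, rfl⟩,
      fun x hx j k hj hk α hα => (hparts x hx k hk).2.1 j hj α hα,
      fun x hx k hk α γ hα hγ => (hparts x hx k hk).2.2 α hα γ hγ⟩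
  · rintro ⟨hleaf, hcond2, hcond3⟩ x hx k hk
    refine (hblocks x hx k hk).2 ⟨?_, fun j hj α hα => hcond2 x hx j k hj hk α hα,
      fun α hα γ hγ => hcond3 x hx k hk α γ hα hγ⟩
    obtain ⟨k, rfl⟩ := hk
    rintro _ ⟨i, rfl⟩ _ ⟨j, rfl⟩
    exact hleaf x hx k i j

end Splitting

section LeadingCoordinates

lemma lie_apply_eq_sum_ite {m R : Type*} [Fintype m] [CommRing R] {A : Matrix m m R}
    {i j : m} {p q : m → Prop} [DecidablePred p] [DecidablePred q]
    (hp : ∀ b, ¬p b → A b j = 0) (hq : ∀ b, ¬q b → A i b = 0) (B : Matrix m m R) :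
    ⁅B, A⁆ i j = (∑ b, if p b then B i b * A b j else 0)
      - ∑ b, if q b then A i b * B b j else 0 := by
  rw [Ring.lie_def, Matrix.sub_apply, mul_apply, mul_apply]
  congr 1 <;> refine Finset.sum_congr rfl fun b _ => (ite_eq_left_iff.2 fun hb => ?_).symm
  · rw [hp b hb, mul_zero]
  · rw [hq b hb, zero_mul]

lemma dTrace_eq_pd_sum_ite {L : (ι → ℝ) → Matrix ι ι ℝ} {x : ι → ℝ} {α : ι} {q : ι → Prop}
    [DecidablePred q] (hLdiff : ∀ i, DifferentiableAt ℝ (fun y => L y i i) x)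
    (hL : ∀ i, ¬q i → pd α (fun y => L y i i) x = 0) :
    dTrace L x α = pd α (fun y => ∑ i, if q i then L y i i else 0) x := by
  have hdiff : ∀ i, DifferentiableAt ℝ (fun y => if q i then L y i i else 0) x := by
    intro i
    by_cases hi : q i
    · simpa only [if_pos hi] using hLdiff i
    · simp only [if_neg hi, differentiableAt_const]
  rw [dTrace, pd_trace hLdiff, pd_sum fun i _ => hdiff i]
  refine Finset.sum_congr rfl fun i _ => ?_
  by_cases hi : q i
  · simp only [if_pos hi, pdMatrix, diag_apply, of_apply]
  · simp only [if_neg hi, pd_const]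
    exact hL i hi

variable {n r : ℕ} (hr : r ≤ n)

lemma inj1_injective : (inj1 hr).Injective :=
  Fin.castLE_injective hr

lemma mem_range_inj1 {i : Fin n} : i ∈ Set.range (inj1 hr) ↔ (i : ℕ) < r :=
  Set.ext_iff.1 (Fin.range_castLE hr) i

lemma slice1_eq_extend (p : Fin n → ℝ) (z : Fin r → ℝ) :
    slice1 hr p z = Function.extend (inj1 hr) z p := by
  ext i
  by_cases hi : (i : ℕ) < r
  · exact (dif_pos hi).trans ((inj1_injective hr).extend_apply z p ⟨i, hi⟩).symm
  · rw [Function.extend_apply' _ _ _ (mt (mem_range_inj1 hr).1 hi), slice1, dif_neg hi]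

lemma blk1_eq_leafBlock (A : (Fin n → ℝ) → Matrix (Fin n) (Fin n) ℝ) (p : Fin n → ℝ) :
    blk1 hr A p = leafBlock (inj1 hr) A p := by
  ext z i j
  rw [blk1, leafBlock, Matrix.of_apply, slice1_eq_extend, submatrix_apply]

lemma isBlockDiag_range_inj1_iff {A : Matrix (Fin n) (Fin n) ℝ} :
    IsBlockDiag (Set.range (inj1 hr)) A ↔ ∀ i j : Fin n,
      (((i : ℕ) < r ∧ r ≤ (j : ℕ)) ∨ (r ≤ (i : ℕ) ∧ (j : ℕ) < r)) → A i j = 0 := by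
  simp only [IsBlockDiag, mem_range_inj1, not_lt]
  constructor
  · rintro hA i j (⟨hi, hj⟩ | ⟨hi, hj⟩)
    exacts [(hA hi hj).1, (hA hj hi).2]
  · exact fun hA i hi j hj => ⟨hA i j (.inl ⟨hi, hj⟩), hA j i (.inr ⟨hj, hi⟩)⟩

end LeadingCoordinates

theorem stmt18 {n r : ℕ} (hr : r ≤ n) (U : Set (Fin n → ℝ)) (hU : IsOpen U)
    (g : (Fin n → ℝ) → Matrix (Fin n) (Fin n) ℝ) (hg : IsMetricOn g U)
    (L : (Fin n → ℝ) → Matrix (Fin n) (Fin n) ℝ)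
    (hLsmooth : ∀ i j, ContDiffOn ℝ (⊤ : ℕ∞) (fun x => L x i j) U)
    (hLsa : ∀ x ∈ U, (g x * L x)ᵀ = g x * L x)
    (hLdet : ∀ x ∈ U, IsUnit (L x).det)
    -- `g` and `L` are block-diagonal, `g = diag(g₁(x,y), g₂(x,y))`,
    -- `L = diag(L₁(x), L₂(y))`
    (hgblock : ∀ x ∈ U, ∀ i j : Fin n,
      (((i : ℕ) < r ∧ r ≤ (j : ℕ)) ∨ (r ≤ (i : ℕ) ∧ (j : ℕ) < r)) → g x i j = 0)
    (hLblock : ∀ x ∈ U, ∀ i j : Fin n,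
      (((i : ℕ) < r ∧ r ≤ (j : ℕ)) ∨ (r ≤ (i : ℕ) ∧ (j : ℕ) < r)) → L x i j = 0)
    (hL1x : ∀ x ∈ U, ∀ i j : Fin n, (i : ℕ) < r → (j : ℕ) < r →
      ∀ m : Fin n, r ≤ (m : ℕ) → pd m (fun y => L y i j) x = 0)
    (hL2y : ∀ x ∈ U, ∀ i j : Fin n, r ≤ (i : ℕ) → r ≤ (j : ℕ) →
      ∀ m : Fin n, (m : ℕ) < r → pd m (fun y => L y i j) x = 0) :
    -- the compatibility equation for all `u ∈ D₁` …
    ((∀ x ∈ U, ∀ k : Fin n, (k : ℕ) < r → ∀ i j : Fin n,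
        covDerivT g L x k i j
          = (1 / 2) * ((if i = k then 1 else 0) * pd j (fun y => (L y).trace) x
              + (∑ s, (g x)⁻¹ i s * pd s (fun y => (L y).trace) x) * g x k j))
      ↔
      -- … is equivalent to the conjunction of the three conditions:
      -- Condition 1: `g₁(·,y)` and `L₁` are compatible on every leaf `{y = const}`
      ((∀ p ∈ U, Compatible (blk1 hr g p) (blk1 hr L p) {z | slice1 hr p z ∈ U}) ∧
      -- Condition 2: `(g₁⁻¹ d_y g₁)L₂ − L₁(g₁⁻¹ d_y g₁) = Id ⊗ d_y tr L₂`
      (∀ x ∈ U, ∀ j k : Fin n, (j : ℕ) < r → (k : ℕ) < r →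
        ∀ α : Fin n, r ≤ (α : ℕ) →
        (∑ β : Fin n, if r ≤ (β : ℕ) then
            (∑ m, (g x)⁻¹ j m * pd β (fun y => g y m k) x) * L x β α else 0)
          - (∑ m : Fin n, if (m : ℕ) < r then
              L x j m * (∑ l, (g x)⁻¹ m l * pd α (fun y => g y l k) x) else 0)
          = (if j = k then 1 else 0) *
              pd α (fun y => ∑ β : Fin n, if r ≤ (β : ℕ) then L y β β else 0) x) ∧
      -- Condition 3: `(g₂⁻¹ d_x g₂)L₂ − L₂(g₂⁻¹ d_x g₂) = 0`
      (∀ x ∈ U, ∀ k : Fin n, (k : ℕ) < r → ∀ α γ : Fin n,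
        r ≤ (α : ℕ) → r ≤ (γ : ℕ) →
        (∑ β : Fin n, if r ≤ (β : ℕ) then
            (∑ μ, (g x)⁻¹ α μ * pd k (fun y => g y μ β) x) * L x β γ else 0)
          - (∑ β : Fin n, if r ≤ (β : ℕ) then
              L x α β * (∑ μ, (g x)⁻¹ β μ * pd k (fun y => g y μ γ) x) else 0)
          = 0))) := by
  have hLdiff : ∀ i j, DifferentiableOn ℝ (fun x => L x i j) U :=
    fun i j => (hLsmooth i j).differentiableOn (by simp)
  have hsplit := stmt18_general (inj1_injective hr) hU
    (fun i j => (hg.smooth i j).differentiableOn (by simp)) hLdiff hg.symm hg.nondeg hLsa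
    (fun x hx => (isBlockDiag_range_inj1_iff hr).2 (hgblock x hx))
    (fun x hx => (isBlockDiag_range_inj1_iff hr).2 (hLblock x hx)) (by
      simpa only [mem_range_inj1, not_lt] using
        fun x hx i hi j hj k hk => hL2y x hx i j hi hj k hk)
  simp only [mem_range_inj1, not_lt, compatDefect_eq_zero_iff, ← slice1_eq_extend,
    ← blk1_eq_leafBlock] at hsplit
  refine hsplit.trans (and_congr_right' (and_congr ?_ ?_))
  · refine forall₄_congr fun x hx j k => forall₄_congr fun hj _ α hα => ?_
    rw [lie_apply_eq_sum_ite (fun β hβ => hLblock x hx β α (.inl ⟨not_le.1 hβ, hα⟩))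
        (fun β hβ => hLblock x hx j β (.inl ⟨hj, not_lt.1 hβ⟩)),
      dTrace_eq_pd_sum_ite (fun i => (hLdiff i i).differentiableAt (hU.mem_nhds hx))
        (fun i hi => hL1x x hx i i (not_le.1 hi) (not_le.1 hi) α hα)]
    rfl
  · refine forall₄_congr fun x hx k _ => forall₄_congr fun α γ hα hγ => ?_
    rw [lie_apply_eq_sum_ite (fun β hβ => hLblock x hx β γ (.inl ⟨not_le.1 hβ, hγ⟩))
        (fun β hβ => hLblock x hx α β (.inr ⟨hα, not_le.1 hβ⟩))]
    rfl
end
end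

section
/- Let L and B be n×n matrices over ℝ and let f be a polynomial with real coefficients. Then the commutator of the directional derivative of f at L in the direction B with L equals the commutator of B with f(L): [ (d/dt)|_{t=0} f(L + tB), L ] = [B, f(L)], where [X,Y] = XY − YX. -/
open Matrix Polynomial

noncomputable section

/-! The matrices `f (L + t • B)` and `L + t • B` commute for every `t`. Differentiating this
relation at `t = 0` with the product rule gives `D * L + f(L) * B = B * f(L) + L * D`. -/

open Filter Topology

theorem commute_aeval_self {R A : Type*} [CommSemiring R] [Semiring A] [Algebra R A]
    (a : A) (f : R[X]) : Commute (aeval a f) a := by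
  simpa only [aeval_X] using (Commute.all f X).map (aeval a)

section NormedAlgebra

variable {𝕜 A : Type*} [NontriviallyNormedField 𝕜] [NormedRing A] [NormedAlgebra 𝕜 A]

theorem lie_eq_lie_of_hasDerivAt_of_commute {u v : 𝕜 → A} {u' v' : A} {x : 𝕜}
    (hu : HasDerivAt u u' x) (hv : HasDerivAt v v' x) (huv : ∀ᶠ t in 𝓝 x, Commute (u t) (v t)) :
    ⁅u', v x⁆ = ⁅v', u x⁆ := by
  have hvu : HasDerivAt (v * u) (u' * v x + u x * v') x := (hu.mul hv).congr_of_eventuallyEq <|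
    huv.mono fun _ h => h.symm.eq
  have product_rules_agree : u' * v x + u x * v' = v' * u x + v x * u' :=
    hvu.unique (hv.mul hu)
  rwa [Ring.lie_def, Ring.lie_def, sub_eq_sub_iff_add_eq_add]

variable {R : Type*} [CommSemiring R] [Algebra R A]

theorem differentiableAt_aeval_comp {E : Type*} [NormedAddCommGroup E] [NormedSpace 𝕜 E]
    {γ : E → A} {x : E} (hγ : DifferentiableAt 𝕜 γ x) (f : R[X]) :
    DifferentiableAt 𝕜 (fun t => aeval (γ t) f) x := by
  simp only [aeval_eq_sum_range, Algebra.smul_def]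
  fun_prop

theorem stmt19_general {γ : 𝕜 → A} {γ' D : A} {x : 𝕜} (hγ : HasDerivAt γ γ' x) (f : R[X])
    (hD : D = deriv (fun t => aeval (γ t) f) x) : ⁅D, γ x⁆ = ⁅γ', aeval (γ x) f⁆ := by
  have hD' : HasDerivAt (fun t => aeval (γ t) f) D x :=
    hD ▸ (differentiableAt_aeval_comp hγ.differentiableAt f).hasDerivAt
  exact lie_eq_lie_of_hasDerivAt_of_commute hD' hγ
    (.of_forall fun t => commute_aeval_self (γ t) f)

end NormedAlgebra

theorem hasDerivAt_const_add_smul {𝕜 E : Type*} [NontriviallyNormedField 𝕜]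
    [NormedAddCommGroup E] [NormedSpace 𝕜 E] (a b : E) (x : 𝕜) :
    HasDerivAt (fun t : 𝕜 => a + t • b) b x := by
  simpa only [id, one_smul] using ((hasDerivAt_id x).smul_const b).const_add a

theorem deriv_matrix_apply {𝕜 E m n : Type*} [NontriviallyNormedField 𝕜]
    [NormedAddCommGroup E] [NormedSpace 𝕜 E] [Finite m] [Finite n] {F : 𝕜 → Matrix m n E}
    {x : 𝕜} (hF : DifferentiableAt 𝕜 F x) (i : m) (j : n) :
    deriv F x i j = deriv (fun t => F t i j) x := by
  cases nonempty_fintype m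
  cases nonempty_fintype n
  have hrow : ∀ i, DifferentiableAt 𝕜 (fun t => F t i) x := differentiableAt_pi.1 hF
  have hentry : ∀ j, DifferentiableAt 𝕜 (fun t => F t i j) x := differentiableAt_pi.1 (hrow i)
  exact (congrFun (congrFun (deriv_pi hrow) i) j).trans (congrFun (deriv_pi hentry) j)

-- Any submultiplicative norm would do: `deriv` only sees the entrywise topology.
open scoped Matrix.Norms.Operator in
theorem deriv_aeval_add_smul_apply {𝕜 R n : Type*} [NontriviallyNormedField 𝕜] [CommSemiring R]
    [Algebra R 𝕜] [Fintype n] [DecidableEq n] (L B : Matrix n n 𝕜) (f : R[X]) (x : 𝕜) (i j : n) :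
    deriv (fun t : 𝕜 => aeval (L + t • B) f) x i j =
      deriv (fun t : 𝕜 => aeval (L + t • B) f i j) x :=
  deriv_matrix_apply
    (differentiableAt_aeval_comp (hasDerivAt_const_add_smul L B x).differentiableAt f) i j

theorem stmt19 {n : ℕ} (L B : Matrix (Fin n) (Fin n) ℝ) (f : Polynomial ℝ)
    -- `D = (d/dt)|₀ f(L + tB)`, computed entrywise
    (D : Matrix (Fin n) (Fin n) ℝ)
    (hD : ∀ i j, D i j = deriv (fun t : ℝ => aeval (L + t • B) f i j) 0) :
    -- then `[D, L] = [B, f(L)]`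
    D * L - L * D = B * aeval L f - aeval L f * B := by
  have hD' : D = deriv (fun t : ℝ => aeval (L + t • B) f) 0 :=
    Matrix.ext fun i j => (hD i j).trans (deriv_aeval_add_smul_apply L B f 0 i j).symm
  open scoped Matrix.Norms.Operator in
  simpa only [Ring.lie_def, zero_smul, add_zero] using
    stmt19_general (hasDerivAt_const_add_smul L B (0 : ℝ)) f hD'
end
end
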